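/- For λ = 1/2 and all φ, ψ ∈ A, one has C^{1/2}_1(φ,ψ) = (1/2){φ,ψ}; that is, the first-order coefficient of the star product ⋆_{1/2} is half the Poisson bracket. -/

import Mathlib

open MvPolynomial

/-- The polynomial symbol algebra `A = ℂ[u₁,…,uₙ,ξ₁,…,ξₙ]`: variables `Sum.inl i` are the
`uᵢ` and variables `Sum.inr i` are the `ξᵢ`. -/
abbrev PolA (n : ℕ) := MvPolynomial (Fin n ⊕ Fin n) ℂ

namespace LO

/-- ξ-degree of a monomial exponent. -/
def xiDeg {n : ℕ} (d : (Fin n ⊕ Fin n) →₀ ℕ) : ℕ :=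
  ∑ i : Fin n, d (Sum.inr i)

/-- `c(E)`: the operator multiplying the ξ-degree-`m` component by `c m`. -/
noncomputable def cE {n : ℕ} (c : ℕ → ℂ) (φ : PolA n) : PolA n :=
  ∑ d ∈ φ.support, monomial d (c (xiDeg d) * coeff d φ)

/-- `D = Σᵢ ∂²/∂uᵢ∂ξᵢ`. -/
noncomputable def Dop {n : ℕ} (φ : PolA n) : PolA n :=
  ∑ i : Fin n, pderiv (Sum.inl i) (pderiv (Sum.inr i) φ)

/-- The scalar `h^λ_d(m)`. -/
noncomputable def hScal (n : ℕ) (lam : ℂ) (d m : ℕ) : ℂ :=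
  (d.factorial : ℂ)⁻¹ *
    ∏ j ∈ Finset.range d,
      ((m : ℂ) + (j : ℂ) + lam * ((n : ℂ) + 1)) /
        (2 * (m : ℂ) + (j : ℂ) + (n : ℂ) + (d : ℂ))

/-- The scalar `g^λ_d(m)`. -/
noncomputable def gScal (n : ℕ) (lam : ℂ) (d m : ℕ) : ℂ :=
  (d.factorial : ℂ)⁻¹ *
    ∏ j ∈ Finset.range d,
      (-(m : ℂ) - (j : ℂ) - lam * ((n : ℂ) + 1)) /
        (2 * (m : ℂ) + (j : ℂ) + (n : ℂ) + 1)

/-- `bh^λ_d = h^λ_d(E) ∘ D^d` (equal to the identity for `d = 0`). -/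
noncomputable def bh {n : ℕ} (lam : ℂ) (d : ℕ) (φ : PolA n) : PolA n :=
  cE (hScal n lam d) (Dop^[d] φ)

/-- `bg^λ_d = g^λ_d(E) ∘ D^d` (equal to the identity for `d = 0`). -/
noncomputable def bg {n : ℕ} (lam : ℂ) (d : ℕ) (φ : PolA n) : PolA n :=
  cE (gScal n lam d) (Dop^[d] φ)

/-- `N_k(φ,ψ) = (1/k!) Σ_{α ∈ {1,…,n}^k} ∂^kφ/∂ξ_α · ∂^kψ/∂u_α`. -/
noncomputable def Nop {n : ℕ} (k : ℕ) (φ ψ : PolA n) : PolA n :=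
  (k.factorial : ℂ)⁻¹ •
    ∑ α : Fin k → Fin n,
      ((List.ofFn α).foldr (fun i acc => pderiv (Sum.inr i) acc) φ) *
      ((List.ofFn α).foldr (fun i acc => pderiv (Sum.inl i) acc) ψ)

/-- The coefficient `C^λ_p` of the Lecomte–Ovsienko star product. -/
noncomputable def C (n : ℕ) (lam : ℂ) (p : ℕ) (φ ψ : PolA n) : PolA n :=
  ∑ i ∈ Finset.range (p + 1), ∑ j ∈ Finset.range (p + 1),
    ∑ k ∈ Finset.range (p + 1), ∑ m ∈ Finset.range (p + 1),
      if i + j + k + m = p then bg lam m (Nop k (bh lam i φ) (bh lam j ψ)) else 0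

/-- The Poisson bracket `{φ,ψ}`. -/
noncomputable def pb {n : ℕ} (φ ψ : PolA n) : PolA n :=
  ∑ i : Fin n,
    (pderiv (Sum.inr i) φ * pderiv (Sum.inl i) ψ
      - pderiv (Sum.inl i) φ * pderiv (Sum.inr i) ψ)

/-- `φ ∈ A^m` (ξ-homogeneous of degree `m`; for `m < 0` this forces `φ = 0`). -/
def IsXiHomog {n : ℕ} (m : ℤ) (φ : PolA n) : Prop :=
  ∀ d ∈ φ.support, (xiDeg d : ℤ) = m

/-- The set of spanning momentum functions of the projective `sl_{n+1}(ℝ)`-action. -/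
noncomputable def momSet (n : ℕ) : Set (PolA n) :=
  (Set.range fun i : Fin n => (X (Sum.inr i) : PolA n)) ∪
  (Set.range fun ij : Fin n × Fin n =>
    (X (Sum.inl ij.1) * X (Sum.inr ij.2) : PolA n)) ∪
  (Set.range fun i : Fin n =>
    (X (Sum.inl i) * ∑ k : Fin n, X (Sum.inl k) * X (Sum.inr k) : PolA n))

/-- The span `M` of the momentum functions. -/
noncomputable def momSpan (n : ℕ) : Submodule ℂ (PolA n) := Submodule.span ℂ (momSet n)

/-- The Weyl algebra `W` of differential operators with polynomial coefficients,
as a subalgebra of `End_ℂ(A)`. -/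
noncomputable def Weyl (n : ℕ) : Subalgebra ℂ (Module.End ℂ (PolA n)) :=
  Algebra.adjoin ℂ
    ((Set.range fun i : Fin n =>
        (LinearMap.mulLeft ℂ (X (Sum.inl i)) : Module.End ℂ (PolA n))) ∪
     (Set.range fun i : Fin n =>
        (LinearMap.mulLeft ℂ (X (Sum.inr i)) : Module.End ℂ (PolA n))) ∪
     (Set.range fun v : Fin n ⊕ Fin n =>
        ((pderiv v).toLinearMap : Module.End ℂ (PolA n))))

/-- A bilinear map `B : A × A → A` is bidifferential if it is a finite sum
`B(φ,ψ) = Σ_α A_α(φ)·B_α(ψ)` with `A_α, B_α` in the Weyl algebra. -/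
def Bidiff (n : ℕ) (B : PolA n → PolA n → PolA n) : Prop :=
  ∃ (N : ℕ) (Aop Bop : Fin N → Weyl n),
    ∀ φ ψ : PolA n,
      B φ ψ = ∑ α : Fin N,
        (Aop α : Module.End ℂ (PolA n)) φ * (Bop α : Module.End ℂ (PolA n)) ψ

/-- The scalar by which `T_p = ∏_{i=1}^{⌊p/2⌋}(E'+i)` acts on `A^m`. -/
noncomputable def TScal (n p m : ℕ) : ℂ :=
  ∏ i ∈ Finset.Icc 1 (p / 2), ((m : ℂ) + (n : ℂ) / 2 + (i : ℂ))

/-- The scalar by which `S_p = ∏_{i=1}^{⌊p/2⌋}(E'−i)` acts on `A^m`. -/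
noncomputable def SScal (n p m : ℕ) : ℂ :=
  ∏ i ∈ Finset.Icc 1 (p / 2), ((m : ℂ) + (n : ℂ) / 2 - (i : ℂ))

/-- The operator `T_p`. -/
noncomputable def Tp (n p : ℕ) : PolA n → PolA n := cE (TScal n p)

/-- The operator `S_p`. -/
noncomputable def Sp (n p : ℕ) : PolA n → PolA n := cE (SScal n p)

/-- The fiberwise Euler operator `E = Σ ξᵢ ∂/∂ξᵢ` as an endomorphism. -/
noncomputable def Elin (n : ℕ) : Module.End ℂ (PolA n) :=
  ∑ i : Fin n,
    (LinearMap.mulLeft ℂ (X (Sum.inr i)) : Module.End ℂ (PolA n)) ∘ₗ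
      (pderiv (Sum.inr i)).toLinearMap

/-- `E' = E + n/2` as an endomorphism. -/
noncomputable def E'lin (n : ℕ) : Module.End ℂ (PolA n) :=
  Elin n + ((n : ℂ) / 2) • 1

/-- `D` as an endomorphism. -/
noncomputable def Dlin (n : ℕ) : Module.End ℂ (PolA n) :=
  ∑ i : Fin n,
    ((pderiv (Sum.inl i)).toLinearMap : Module.End ℂ (PolA n)) ∘ₗ
      (pderiv (Sum.inr i)).toLinearMap

/-- `L^{(m)} = −(1/16)(ξ_m∘D − 2E'∘∂/∂u_m)∘D`. -/
noncomputable def Lop (n : ℕ) (m : Fin n) : Module.End ℂ (PolA n) :=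
  (-(1 / 16 : ℂ)) •
    (((LinearMap.mulLeft ℂ (X (Sum.inr m)) : Module.End ℂ (PolA n)) ∘ₗ Dlin n
        - (2 : ℂ) • (E'lin n ∘ₗ (pderiv (Sum.inl m)).toLinearMap)) ∘ₗ Dlin n)

end LO

namespace LO

lemma cE_const {n : ℕ} (c : ℕ → ℂ) (a : ℂ) (h : ∀ m, c m = a) (φ : PolA n) :
    cE c φ = a • φ := by
  unfold cE
  conv_rhs => rw [φ.as_sum, Finset.smul_sum]
  refine Finset.sum_congr rfl fun d _ => ?_
  rw [h, smul_monomial, smul_eq_mul]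

lemma aux_ne (n m : ℕ) : (2 * (m : ℂ) + (n : ℂ) + 1) ≠ 0 := by
  exact_mod_cast Nat.succ_ne_zero (2 * m + n)

lemma bh_zero {n : ℕ} (lam : ℂ) (φ : PolA n) : bh lam 0 φ = φ := by
  unfold bh
  rw [cE_const _ 1 (by intro m; simp [hScal])]
  simp

lemma bg_zero {n : ℕ} (lam : ℂ) (φ : PolA n) : bg lam 0 φ = φ := by
  unfold bg
  rw [cE_const _ 1 (by intro m; simp [gScal])]
  simp

lemma bh_one {n : ℕ} (φ : PolA n) : bh (1 / 2) 1 φ = (1 / 2 : ℂ) • Dop φ := by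
  unfold bh
  rw [cE_const _ (1 / 2)]
  · simp
  · intro m
    have := aux_ne n m
    simp [hScal]
    rw [div_eq_iff this]
    ring

lemma bg_one {n : ℕ} (φ : PolA n) : bg (1 / 2) 1 φ = (-(1 / 2) : ℂ) • Dop φ := by
  unfold bg
  rw [cE_const _ (-(1 / 2))]
  · simp
  · intro m
    have := aux_ne n m
    simp [gScal]
    rw [div_eq_iff this]
    ring

lemma Nop_zero {n : ℕ} (φ ψ : PolA n) : Nop 0 φ ψ = φ * ψ := by
  simp [Nop]

lemma Nop_one {n : ℕ} (φ ψ : PolA n) :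
    Nop 1 φ ψ = ∑ i : Fin n, pderiv (Sum.inr i) φ * pderiv (Sum.inl i) ψ := by
  simp only [Nop, Nat.factorial_one, Nat.cast_one, inv_one, one_smul]
  refine Fintype.sum_equiv (Equiv.funUnique (Fin 1) (Fin n)) _ _ fun α => ?_
  simp [List.ofFn_succ]

lemma Dop_mul {n : ℕ} (φ ψ : PolA n) :
    Dop (φ * ψ) = Dop φ * ψ + φ * Dop ψ
      + ∑ i : Fin n, pderiv (Sum.inr i) φ * pderiv (Sum.inl i) ψ
      + ∑ i : Fin n, pderiv (Sum.inl i) φ * pderiv (Sum.inr i) ψ := by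
  simp only [Dop, Finset.sum_mul, Finset.mul_sum, ← Finset.sum_add_distrib]
  refine Finset.sum_congr rfl fun i _ => ?_
  simp only [pderiv_mul, map_add]
  ring

end LO

/-- `C^{1/2}_1(φ,ψ) = (1/2){φ,ψ}` for all `φ, ψ ∈ A`. -/
theorem stmt_7 (n : ℕ) (hn : 1 ≤ n) (φ ψ : PolA n) :
    LO.C n (1 / 2) 1 φ ψ = (1 / 2 : ℂ) • LO.pb φ ψ := by
  simp only [LO.C, Finset.sum_range_succ, Finset.sum_range_zero]
  simp [-one_div, LO.bh_zero, LO.bg_zero, LO.bh_one, LO.bg_one, LO.Nop_zero, LO.Nop_one,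
    LO.Dop_mul, LO.pb, Finset.sum_sub_distrib]
  module
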